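/- Let H be a real Hilbert space, λ ∈ ℝ, and let (f_h) and f be proper, λ-convex, lower semicontinuous functions from H to (-∞,∞] such that for every x ∈ H and every sequence x_h → x strongly one has liminf_h f_h(x_h) ≥ f(x), and for every x ∈ H there exist y_h → x strongly with limsup_h f_h(y_h) ≤ f(x). Let x_{h,i} → x_i strongly for i = 0,1. Then for every sequence γ_h → γ uniformly in C([0,1];H), one has liminf_h Θ_{f_h,x_{h,0},x_{h,1}}(γ_h) ≥ Θ_{f,x_0,x_1}(γ). -/

import Mathlib

open Filter Topology MeasureTheory Set
open scoped ENNReal RealInnerProductSpace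

noncomputable section

attribute [local instance] Classical.propDecidable

variable {H : Type*} [NormedAddCommGroup H] [InnerProductSpace ℝ H] [CompleteSpace H]

/-- `f : H → (-∞,∞]` is proper: not identically `⊤` (and it never takes the value `⊥`). -/
def ProperFn (f : H → EReal) : Prop :=
  (∃ x, f x ≠ ⊤) ∧ ∀ x, f x ≠ ⊥

/-- `f` is `λ`-convex: `x ↦ f x - (λ/2)‖x‖²` is convex, expressed via the perturbed
convexity inequality. -/
def LambdaConvex (lam : ℝ) (f : H → EReal) : Prop :=
  ∀ x y : H, ∀ t : ℝ, 0 ≤ t → t ≤ 1 →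
    f ((1 - t) • x + t • y)
      ≤ ((1 - t : ℝ) : EReal) * f x + ((t : ℝ) : EReal) * f y
        - ((lam / 2 * (t * (1 - t)) * ‖x - y‖ ^ 2 : ℝ) : EReal)

/-- The subdifferential of a `λ`-convex function at `x` (contained in the domain of `f`). -/
def subdiff (lam : ℝ) (f : H → EReal) (x : H) : Set H :=
  {p : H | f x ≠ ⊤ ∧
    ∀ y : H, f x + ((⟪p, y - x⟫ + lam / 2 * ‖y - x‖ ^ 2 : ℝ) : EReal) ≤ f y}

/-- `∇f(x)`: the element of minimal norm of `∂f(x)` (junk value `0` if there is none). -/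
def gradMin (lam : ℝ) (f : H → EReal) (x : H) : H :=
  if h : ∃ p ∈ subdiff lam f x, ∀ q ∈ subdiff lam f x, ‖p‖ ≤ ‖q‖ then h.choose else 0

/-- `|∇f|(x) ∈ [0,∞]`, equal to `+∞` when `∂f(x) = ∅` (in particular when `f x = ⊤`). -/
def gradNorm (lam : ℝ) (f : H → EReal) (x : H) : ℝ≥0∞ :=
  if (subdiff lam f x).Nonempty then ENNReal.ofReal ‖gradMin lam f x‖ else ⊤

/-- The resolvent `J_τ(x)`: the minimizer of `y ↦ f y + ‖y-x‖²/(2τ)` (junk `0` if none). -/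
def Jres (f : H → EReal) (τ : ℝ) (x : H) : H :=
  if h : ∃ y : H, ∀ z : H,
      f y + ((‖y - x‖ ^ 2 / (2 * τ) : ℝ) : EReal)
        ≤ f z + ((‖z - x‖ ^ 2 / (2 * τ) : ℝ) : EReal)
  then h.choose else 0

/-- The Moreau–Yosida regularization `f_τ(x) = min_y (f y + ‖y-x‖²/(2τ))`. -/
def moreau (f : H → EReal) (τ : ℝ) (x : H) : ℝ :=
  (f (Jres f τ x)).toReal + ‖Jres f τ x - x‖ ^ 2 / (2 * τ)

/-- `γ` is absolutely continuous on `[a,b]` with an integrable derivative. -/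
abbrev IsACCurve (a b : ℝ) (γ : ℝ → H) : Prop :=
  ∃ g : ℝ → H, IntegrableOn g (Icc a b) ∧ ∀ t ∈ Icc a b, γ t = γ a + ∫ s in a..t, g s

/-- The action `I_f^{[a,b]}(γ) = ∫_a^b (‖γ̇‖² + |∇f|²(γ)) dt ∈ [0,∞]`, set to `+∞` when `γ`
is not absolutely continuous. -/
def actionFn (lam : ℝ) (f : H → EReal) (a b : ℝ) (γ : ℝ → H) : ℝ≥0∞ :=
  if h : IsACCurve a b γ then
    ∫⁻ t in Ioc a b, (ENNReal.ofReal (‖h.choose t‖ ^ 2) + gradNorm lam f (γ t) ^ 2)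
  else ⊤

/-- `Θ_{f,x₀,x₁}`: the action on `[0,1]` with endpoint constraints. -/
def Theta (lam : ℝ) (f : H → EReal) (x0 x1 : H) (γ : ℝ → H) : ℝ≥0∞ :=
  if γ 0 = x0 ∧ γ 1 = x1 then actionFn lam f 0 1 γ else ⊤

/-- `Γ_δ(x₀,x_δ)`: infimum of the action over curves joining the endpoints. -/
def GammaInf (lam : ℝ) (f : H → EReal) (δ : ℝ) (x0 xδ : H) : ℝ≥0∞ :=
  ⨅ (γ : ℝ → H) (_ : γ 0 = x0 ∧ γ δ = xδ), actionFn lam f 0 δ γ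

/-- Mosco convergence of `fh` to `f`: recovery sequences for the strong topology, and the
`liminf` inequality along weakly convergent sequences. -/
def Mosco (fh : ℕ → H → EReal) (f : H → EReal) : Prop :=
  (∀ x : H, ∃ xh : ℕ → H, Tendsto xh atTop (𝓝 x) ∧
      Filter.limsup (fun h => fh h (xh h)) atTop ≤ f x) ∧
  (∀ (xh : ℕ → H) (x : H),
      (∀ p : H, Tendsto (fun h => ⟪xh h, p⟫) atTop (𝓝 ⟪x, p⟫)) →
      f x ≤ Filter.liminf (fun h => fh h (xh h)) atTop)

lemma weak_lim {E : Type*} [NormedAddCommGroup E] [InnerProductSpace ℝ E] [CompleteSpace E]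
    {ι : Type*} (U : Ultrafilter ι) (p : ι → E) (C : ℝ) (hC : ∀ᶠ i in (U : Filter ι), ‖p i‖ ≤ C) :
    ∃ q : E, ‖q‖ ≤ C ∧ ∀ v, Tendsto (fun i => ⟪p i, v⟫) (U : Filter ι) (𝓝 ⟪q, v⟫) := by
  have hC0 : 0 ≤ C := by
    obtain ⟨i, hi⟩ := hC.exists
    exact (norm_nonneg _).trans hi
  have key : ∀ v : E, ∃ L : ℝ, ‖L‖ ≤ C * ‖v‖ ∧
      Tendsto (fun i => ⟪p i, v⟫) (U : Filter ι) (𝓝 L) := by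
    intro v
    have hcomp : IsCompact (Metric.closedBall (0 : ℝ) (C * ‖v‖)) := isCompact_closedBall _ _
    obtain ⟨L, hL, hL2⟩ := hcomp.ultrafilter_le_nhds' (U.map (fun i => ⟪p i, v⟫)) (by
      change ∀ᶠ i in (U : Filter ι), ⟪p i, v⟫ ∈ Metric.closedBall (0 : ℝ) (C * ‖v‖)
      filter_upwards [hC] with i hi
      rw [mem_closedBall_zero_iff]
      exact (norm_inner_le_norm _ _).trans (by gcongr))
    exact ⟨L, by simpa using hL, hL2⟩
  choose L hL1 hL2 using key
  let Lm : E →ₗ[ℝ] ℝ :=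
    { toFun := L
      map_add' := fun v w => by
        refine tendsto_nhds_unique (hL2 (v + w)) ?_
        simpa [inner_add_right] using (hL2 v).add (hL2 w)
      map_smul' := fun a v => by
        refine tendsto_nhds_unique (hL2 (a • v)) ?_
        simpa [inner_smul_right] using (hL2 v).const_mul a }
  let Lc := Lm.mkContinuous C hL1
  refine ⟨(InnerProductSpace.toDual ℝ E).symm Lc, ?_, fun v => ?_⟩
  · rw [LinearIsometryEquiv.norm_map]
    exact LinearMap.mkContinuous_norm_le _ hC0 _
  · rw [InnerProductSpace.toDual_symm_apply]
    exact hL2 v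

lemma subdiff_mem_iff {lam : ℝ} {f : H → EReal} (hf : ∀ x, f x ≠ ⊥) {x p : H} :
    p ∈ subdiff lam f x ↔ f x ≠ ⊤ ∧ ∀ y, f y ≠ ⊤ →
      (f x).toReal + (⟪p, y - x⟫ + lam / 2 * ‖y - x‖ ^ 2) ≤ (f y).toReal := by
  unfold subdiff
  simp only [mem_setOf_eq]
  refine and_congr_right fun hx => forall_congr' fun y => ?_
  by_cases hy : f y = ⊤
  · simp [hy]
  · simp only [ne_eq, hy, not_false_eq_true, forall_const]
    conv_lhs => rw [← EReal.coe_toReal hx (hf x), ← EReal.coe_toReal hy (hf y)]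
    norm_cast

lemma gradMin_spec {lam : ℝ} {f : H → EReal} (hf : ∀ x, f x ≠ ⊥) {x : H}
    (hne : (subdiff lam f x).Nonempty) :
    gradMin lam f x ∈ subdiff lam f x ∧ ∀ q ∈ subdiff lam f x, ‖gradMin lam f x‖ ≤ ‖q‖ := by
  have hex : ∃ p ∈ subdiff lam f x, ∀ q ∈ subdiff lam f x, ‖p‖ ≤ ‖q‖ := by
    have hcl : IsClosed (subdiff lam f x) := by
      have : subdiff lam f x = {p | f x ≠ ⊤} ∩ ⋂ y, ⋂ (_ : f y ≠ ⊤),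
          {p | (f x).toReal + (⟪p, y - x⟫ + lam / 2 * ‖y - x‖ ^ 2) ≤ (f y).toReal} := by
        ext p
        rw [subdiff_mem_iff hf]
        simp
      rw [this]
      refine isClosed_const.inter (isClosed_iInter fun y => isClosed_iInter fun _ => ?_)
      exact isClosed_le (by fun_prop) continuous_const
    have hcv : Convex ℝ (subdiff lam f x) := by
      intro p hp q hq a b ha hb hab
      rw [subdiff_mem_iff hf] at *
      refine ⟨hp.1, fun y hy => ?_⟩
      have h1 := hp.2 y hy
      have h2 := hq.2 y hy
      rw [inner_add_left, inner_smul_left, inner_smul_left]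
      simp only [conj_trivial]
      have hb' : b = 1 - a := by linarith
      subst hb'
      nlinarith [mul_le_mul_of_nonneg_left h1 ha, mul_le_mul_of_nonneg_left h2 hb]
    obtain ⟨v, hv, hv2⟩ := exists_norm_eq_iInf_of_complete_convex hne hcl.isComplete hcv 0
    refine ⟨v, hv, fun q hq => ?_⟩
    simp only [zero_sub, norm_neg] at hv2
    rw [hv2]
    exact ciInf_le (f := fun w : subdiff lam f x => ‖(w : H)‖)
      ⟨0, by rintro _ ⟨w, rfl⟩; exact norm_nonneg _⟩ ⟨q, hq⟩
  unfold gradMin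
  rw [dif_pos hex]
  exact hex.choose_spec

lemma gradNorm_le_of_mem {lam : ℝ} {f : H → EReal} (hf : ∀ x, f x ≠ ⊥) {x p : H}
    (hp : p ∈ subdiff lam f x) : gradNorm lam f x ≤ ENNReal.ofReal ‖p‖ := by
  unfold gradNorm
  rw [if_pos ⟨p, hp⟩]
  exact ENNReal.ofReal_le_ofReal ((gradMin_spec hf ⟨p, hp⟩).2 p hp)

lemma gradNorm_le_liminf {ι : Type*} {l : Filter ι} (lam : ℝ) (fh : ι → H → EReal) (f : H → EReal)
    (hfh : ∀ i x, fh i x ≠ ⊥) (hf : ProperFn f) (xh : ι → H) (x : H)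
    (hx : Tendsto xh l (𝓝 x)) (h1 : ∀ a < f x, ∀ᶠ i in l, a < fh i (xh i))
    (h2 : ∀ y, ∃ yh : ι → H, Tendsto yh l (𝓝 y) ∧ ∀ b > f y, ∀ᶠ i in l, fh i (yh i) < b) :
    gradNorm lam f x ≤ liminf (fun i => gradNorm lam (fh i) (xh i)) l := by
  refine le_of_forall_gt_imp_ge_of_dense fun c hc => ?_
  by_cases hct : c = ⊤
  · simp [hct]
  have hfr : ∃ᶠ i in l, gradNorm lam (fh i) (xh i) < c := frequently_lt_of_liminf_lt (by isBoundedDefault) hc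
  haveI : (l ⊓ 𝓟 {i | gradNorm lam (fh i) (xh i) < c}).NeBot := by
    rw [← frequently_mem_iff_neBot]; exact hfr
  obtain ⟨U, hU⟩ := Ultrafilter.exists_le (l ⊓ 𝓟 {i | gradNorm lam (fh i) (xh i) < c})
  have hUl : (U : Filter ι) ≤ l := hU.trans inf_le_left
  have hUc : ∀ᶠ i in (U : Filter ι), gradNorm lam (fh i) (xh i) < c :=
    (hU.trans inf_le_right) (mem_principal_self _)
  have hUp : ∀ᶠ i in (U : Filter ι), gradMin lam (fh i) (xh i) ∈ subdiff lam (fh i) (xh i) ∧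
      ‖gradMin lam (fh i) (xh i)‖ ≤ c.toReal := by
    filter_upwards [hUc] with i hi
    by_cases hne : (subdiff lam (fh i) (xh i)).Nonempty
    · refine ⟨(gradMin_spec (hfh i) hne).1, ?_⟩
      unfold gradNorm at hi
      rw [if_pos hne] at hi
      exact (ENNReal.ofReal_le_iff_le_toReal hct).1 hi.le
    · unfold gradNorm at hi
      rw [if_neg hne] at hi
      exact absurd hi (by simp)
  obtain ⟨q, hq, hqt⟩ := weak_lim U (fun i => gradMin lam (fh i) (xh i)) c.toReal
    (hUp.mono fun i hi => hi.2)
  -- the main inequality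
  have main : ∀ y : H, ∀ a b : ℝ, (a : EReal) < f x → f y < b →
      a + (⟪q, y - x⟫ + lam / 2 * ‖y - x‖ ^ 2) ≤ b := by
    intro y a b ha hb
    obtain ⟨yh, hyh, hyb⟩ := h2 y
    have e1 := (h1 a ha).filter_mono hUl
    have e2 := (hyb b hb).filter_mono hUl
    have d : Tendsto (fun i => yh i - xh i) (U : Filter ι) (𝓝 (y - x)) :=
      (hyh.sub hx).mono_left hUl
    have t1 : Tendsto (fun i => ⟪gradMin lam (fh i) (xh i), yh i - xh i⟫) (U : Filter ι)
        (𝓝 ⟪q, y - x⟫) := by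
      have hz : Tendsto (fun i => ⟪gradMin lam (fh i) (xh i), (yh i - xh i) - (y - x)⟫)
          (U : Filter ι) (𝓝 0) := by
        have hd : Tendsto (fun i => c.toReal * ‖(yh i - xh i) - (y - x)‖) (U : Filter ι) (𝓝 0) := by
          have := ((d.sub_const (y - x)).norm).const_mul c.toReal
          simpa using this
        refine squeeze_zero_norm' ?_ hd
        filter_upwards [hUp] with i hi
        exact (norm_inner_le_norm _ _).trans (by gcongr; exact hi.2)
      have := hz.add (hqt (y - x))
      simpa [← inner_add_right] using this
    have t2 : Tendsto (fun i => a + (⟪gradMin lam (fh i) (xh i), yh i - xh i⟫ +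
        lam / 2 * ‖yh i - xh i‖ ^ 2)) (U : Filter ι)
        (𝓝 (a + (⟪q, y - x⟫ + lam / 2 * ‖y - x‖ ^ 2))) :=
      (t1.add ((d.norm.pow 2).const_mul _)).const_add a
    refine le_of_tendsto t2 ?_
    filter_upwards [e1, e2, hUp] with i i1 i2 i3
    have h3 := i3.1.2 (yh i)
    have h4 : ((a + (⟪gradMin lam (fh i) (xh i), yh i - xh i⟫ +
        lam / 2 * ‖yh i - xh i‖ ^ 2) : ℝ) : EReal) ≤ (b : ℝ) := by
      rw [EReal.coe_add]
      exact ((add_le_add_left i1.le _).trans h3).trans i2.le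
    exact_mod_cast h4
  have hxt : f x ≠ ⊤ := by
    intro htop
    obtain ⟨y, hy⟩ := hf.1
    have hb : f y < (((f y).toReal + 1 : ℝ) : EReal) := by
      conv_lhs => rw [← EReal.coe_toReal hy (hf.2 y)]
      exact_mod_cast lt_add_one _
    have := main y ((f y).toReal + 1 - (⟪q, y - x⟫ + lam / 2 * ‖y - x‖ ^ 2) + 1) _
      (by rw [htop]; exact EReal.coe_lt_top _) hb
    linarith
  have hmem : q ∈ subdiff lam f x := by
    rw [subdiff_mem_iff hf.2]
    refine ⟨hxt, fun y hy => ?_⟩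
    refine le_of_forall_pos_le_add fun ε hε => ?_
    have := main y ((f x).toReal - ε / 2) ((f y).toReal + ε / 2)
      (by
        conv_rhs => rw [← EReal.coe_toReal hxt (hf.2 x)]
        exact_mod_cast (by linarith))
      (by
        conv_lhs => rw [← EReal.coe_toReal hy (hf.2 y)]
        exact_mod_cast (by linarith))
    linarith
  refine (gradNorm_le_of_mem hf.2 hmem).trans ?_
  exact ENNReal.ofReal_le_of_le_toReal hq

lemma gradNorm_lsc (lam : ℝ) (f : H → EReal) (hf : ProperFn f) (hl : LowerSemicontinuous f) :
    LowerSemicontinuous (gradNorm lam f) := by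
  rw [lowerSemicontinuous_iff_le_liminf]
  intro x
  exact gradNorm_le_liminf (l := 𝓝 x) lam (fun _ => f) f (fun _ => hf.2) hf id x tendsto_id
    (fun a ha => hl x a ha)
    (fun y => ⟨fun _ => y, tendsto_const_nhds, fun b hb => Eventually.of_forall fun _ => hb⟩)

lemma gradNorm_meas (lam : ℝ) (f : H → EReal) (hf : ProperFn f) (hl : LowerSemicontinuous f)
    (γ : ℝ → H) (hγ : ContinuousOn γ (Icc 0 1)) :
    AEMeasurable (fun t => gradNorm lam f (γ t) ^ 2) (volume.restrict (Ioc (0 : ℝ) 1)) := by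
  have h1 : AEMeasurable (fun t => gradNorm lam f (γ t)) (volume.restrict (Icc (0 : ℝ) 1)) := by
    refine aemeasurable_restrict_of_measurable_subtype measurableSet_Icc ?_
    have := (gradNorm_lsc lam f hf hl).comp (continuousOn_iff_continuous_restrict.1 hγ)
    exact this.measurable
  exact (h1.mono_measure (Measure.restrict_mono Ioc_subset_Icc_self le_rfl)).pow_const 2

/-- kinetic part of the action -/
def kin (γ : ℝ → H) : ℝ≥0∞ :=
  if h : IsACCurve 0 1 γ then ∫⁻ t in Ioc (0 : ℝ) 1, ENNReal.ofReal (‖h.choose t‖ ^ 2) else ⊤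

lemma action_eq (lam : ℝ) (f : H → EReal) (γ : ℝ → H) :
    actionFn lam f 0 1 γ = kin γ + ∫⁻ t in Ioc (0 : ℝ) 1, gradNorm lam f (γ t) ^ 2 := by
  unfold actionFn kin
  split_ifs with h
  · rw [lintegral_add_left']
    have h1 : IntegrableOn h.choose (Icc 0 1) := h.choose_spec.1
    have h2 := (h1.mono_set Ioc_subset_Icc_self).aestronglyMeasurable
    exact (h2.norm.aemeasurable.pow_const 2).ennreal_ofReal
  · simp

lemma L2_norm_sq {μ : Measure ℝ} (G : Lp H 2 μ) :
    ENNReal.ofReal (‖G‖ ^ 2) = ∫⁻ t, ENNReal.ofReal (‖G t‖ ^ 2) ∂μ := by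
  rw [← real_inner_self_eq_norm_sq, L2.inner_def]
  simp only [real_inner_self_eq_norm_sq]
  refine ofReal_integral_eq_lintegral_ofReal ?_ (Eventually.of_forall fun t => by positivity)
  exact (memLp_two_iff_integrable_sq_norm (Lp.aestronglyMeasurable G)).1 (Lp.memLp G)

lemma restrict_aux {t : ℝ} (ht : t ∈ Icc (0 : ℝ) 1) :
    (volume.restrict (Ioc (0 : ℝ) 1)).restrict (Ioc 0 t) = volume.restrict (Ioc 0 t) := by
  rw [Measure.restrict_restrict measurableSet_Ioc,
    inter_eq_left.2 (Ioc_subset_Ioc_right ht.2)]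

lemma L2_of_kin (γ : ℝ → H) (c : ℝ) (hc : kin γ ≤ ENNReal.ofReal (c ^ 2)) (hc0 : 0 ≤ c) :
    ∃ G : Lp H 2 (volume.restrict (Ioc (0 : ℝ) 1)), ‖G‖ ≤ c ∧
      ∀ t ∈ Icc (0 : ℝ) 1, γ t = γ 0 + ∫ s in Ioc 0 t, G s ∂(volume.restrict (Ioc (0 : ℝ) 1)) := by
  unfold kin at hc
  split_ifs at hc with h
  swap
  · simp at hc
  have h1 : IntegrableOn h.choose (Icc 0 1) := h.choose_spec.1
  have h2 := h.choose_spec.2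
  set g := h.choose
  have hm := (h1.mono_set Ioc_subset_Icc_self).aestronglyMeasurable
  have hi : Integrable (fun t => ‖g t‖ ^ 2) (volume.restrict (Ioc (0 : ℝ) 1)) := by
    refine (lintegral_ofReal_ne_top_iff_integrable (f := fun t => ‖g t‖ ^ 2) (hm.norm.pow 2)
      (Eventually.of_forall fun t => sq_nonneg ‖g t‖)).1 ?_
    exact ne_top_of_le_ne_top ENNReal.ofReal_ne_top hc
  have hL := (memLp_two_iff_integrable_sq_norm hm).2 hi
  refine ⟨hL.toLp g, ?_, fun t ht => ?_⟩
  · have h3 := L2_norm_sq (hL.toLp g)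
    have h4 : ∫⁻ t in Ioc (0 : ℝ) 1, ENNReal.ofReal (‖hL.toLp g t‖ ^ 2) =
        ∫⁻ t in Ioc (0 : ℝ) 1, ENNReal.ofReal (‖g t‖ ^ 2) :=
      lintegral_congr_ae (hL.coeFn_toLp.mono fun t ht => by simp only [ht])
    rw [h4] at h3
    rw [← h3, ENNReal.ofReal_le_ofReal_iff (by positivity)] at hc
    exact (sq_le_sq₀ (norm_nonneg _) hc0).1 hc
  · rw [h2 t ht, intervalIntegral.integral_of_le ht.1]
    congr 1
    rw [← restrict_aux ht]
    exact integral_congr_ae (ae_restrict_of_ae hL.coeFn_toLp.symm)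

lemma ae_unique (g g' : ℝ → H) (hg : IntegrableOn g (Icc 0 1)) (hg' : IntegrableOn g' (Icc 0 1))
    (h : ∀ t ∈ Icc (0 : ℝ) 1, ∫ s in (0 : ℝ)..t, g s = ∫ s in (0 : ℝ)..t, g' s) :
    g =ᵐ[volume.restrict (Ioc (0 : ℝ) 1)] g' := by
  have i1 : IntervalIntegrable g volume 0 1 :=
    (intervalIntegrable_iff_integrableOn_Icc_of_le zero_le_one).2 hg
  have i2 : IntervalIntegrable g' volume 0 1 :=
    (intervalIntegrable_iff_integrableOn_Icc_of_le zero_le_one).2 hg'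
  rw [← Measure.restrict_congr_set (Ioo_ae_eq_Ioc (μ := volume) (a := (0 : ℝ)) (b := 1))]
  refine (ae_restrict_iff' measurableSet_Ioo).2 ?_
  filter_upwards [i1.ae_hasDerivAt_integral, i2.ae_hasDerivAt_integral] with x hx hx' hmem
  rw [uIcc_of_le zero_le_one] at hx hx'
  have a1 := hx (Ioo_subset_Icc_self hmem) 0 (by simp)
  have a2 := hx' (Ioo_subset_Icc_self hmem) 0 (by simp)
  refine a1.unique (a2.congr_of_eventuallyEq ?_)
  filter_upwards [Ioo_mem_nhds hmem.1 hmem.2] with t ht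
  exact h t (Ioo_subset_Icc_self ht)

lemma kin_le_of_L2 (γ : ℝ → H) (G : Lp H 2 (volume.restrict (Ioc (0 : ℝ) 1)))
    (hG : ∀ t ∈ Icc (0 : ℝ) 1, γ t = γ 0 + ∫ s in Ioc 0 t, G s ∂(volume.restrict (Ioc (0 : ℝ) 1))) :
    kin γ ≤ ENNReal.ofReal (‖G‖ ^ 2) := by
  have hint : IntegrableOn G (Icc 0 1) := by
    rw [integrableOn_Icc_iff_integrableOn_Ioc]
    exact (Lp.memLp G).integrable (by norm_num)
  have hG' : ∀ t ∈ Icc (0 : ℝ) 1, γ t = γ 0 + ∫ s in (0 : ℝ)..t, G s := by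
    intro t ht
    rw [hG t ht, intervalIntegral.integral_of_le ht.1, restrict_aux ht]
  have hAC : IsACCurve 0 1 γ := ⟨G, hint, hG'⟩
  unfold kin
  rw [dif_pos hAC, L2_norm_sq]
  refine le_of_eq (lintegral_congr_ae ?_)
  have := ae_unique _ _ hAC.choose_spec.1 hint (fun t ht => by
    have e1 := hAC.choose_spec.2 t ht
    rw [hG' t ht] at e1
    exact (add_left_cancel e1).symm)
  exact this.mono fun t ht => by simp only [ht]

lemma kin_le_liminf (γh : ℕ → ℝ → H) (γ : ℝ → H)
    (hconv : ∀ t ∈ Icc (0 : ℝ) 1, Tendsto (fun h => γh h t) atTop (𝓝 (γ t))) :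
    kin γ ≤ liminf (fun h => kin (γh h)) atTop := by
  refine le_of_forall_gt_imp_ge_of_dense fun c hc => ?_
  by_cases hct : c = ⊤
  · simp [hct]
  have hfr : ∃ᶠ i in atTop, kin (γh i) < c := frequently_lt_of_liminf_lt (by isBoundedDefault) hc
  haveI : (atTop ⊓ 𝓟 {i | kin (γh i) < c}).NeBot := by
    rw [← frequently_mem_iff_neBot]; exact hfr
  obtain ⟨U, hU⟩ := Ultrafilter.exists_le (atTop ⊓ 𝓟 {i | kin (γh i) < c})
  have hUl : (U : Filter ℕ) ≤ atTop := hU.trans inf_le_left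
  have hUc : ∀ᶠ i in (U : Filter ℕ), kin (γh i) < c :=
    (hU.trans inf_le_right) (mem_principal_self _)
  set r := √c.toReal
  have hr : ENNReal.ofReal (r ^ 2) = c := by
    rw [Real.sq_sqrt ENNReal.toReal_nonneg, ENNReal.ofReal_toReal hct]
  have hex : ∀ i, ∃ G : Lp H 2 (volume.restrict (Ioc (0 : ℝ) 1)), kin (γh i) < c → ‖G‖ ≤ r ∧
      ∀ t ∈ Icc (0 : ℝ) 1,
        γh i t = γh i 0 + ∫ s in Ioc 0 t, G s ∂(volume.restrict (Ioc (0 : ℝ) 1)) := by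
    intro i
    by_cases hi : kin (γh i) < c
    · obtain ⟨G, hG⟩ := L2_of_kin (γh i) r (hr ▸ hi.le) (Real.sqrt_nonneg _)
      exact ⟨G, fun _ => hG⟩
    · exact ⟨0, fun h => absurd h hi⟩
  choose G hG using hex
  obtain ⟨q, hq, hqt⟩ := weak_lim U G r (hUc.mono fun i hi => (hG i hi).1)
  refine (kin_le_of_L2 γ q fun t ht => ?_).trans ?_
  · rw [← sub_eq_iff_eq_add']
    refine ext_inner_left ℝ fun v => ?_
    have hfin : (volume.restrict (Ioc (0 : ℝ) 1)) (Ioc 0 t) ≠ ⊤ := measure_ne_top _ _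
    have e := hqt (indicatorConstLp 2 measurableSet_Ioc hfin v)
    simp only [real_inner_comm (indicatorConstLp 2 measurableSet_Ioc hfin v),
      L2.inner_indicatorConstLp_eq_inner_setIntegral] at e
    refine tendsto_nhds_unique ?_ e
    have e2 : Tendsto (fun i => ⟪v, γh i t - γh i 0⟫) (U : Filter ℕ) (𝓝 ⟪v, γ t - γ 0⟫) :=
      (tendsto_const_nhds.inner ((hconv t ht).sub (hconv 0 (by simp)))).mono_left hUl
    refine e2.congr' ?_
    filter_upwards [hUc] with i hi
    rw [(hG i hi).2 t ht, add_sub_cancel_left]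
  · rw [← hr]
    exact ENNReal.ofReal_le_ofReal (by gcongr)

lemma liminf_add_ennreal (u v : ℕ → ℝ≥0∞) :
    liminf u atTop + liminf v atTop ≤ liminf (fun n => u n + v n) atTop := by
  simp only [liminf_eq_iSup_iInf_of_nat]
  rw [ENNReal.iSup_add_iSup_of_monotone]
  · refine iSup_mono fun n => le_iInf₂ fun i hi => ?_
    exact add_le_add (iInf₂_le i hi) (iInf₂_le i hi)
  · intro a b hab
    exact le_iInf₂ fun i hi => iInf₂_le i (hab.trans hi)
  · intro a b hab
    exact le_iInf₂ fun i hi => iInf₂_le i (hab.trans hi)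

/-- the Γ-liminf inequality. -/
theorem statement1 (lam : ℝ) (fh : ℕ → H → EReal) (f : H → EReal)
    (hfh_proper : ∀ h, ProperFn (fh h)) (hfh_conv : ∀ h, LambdaConvex lam (fh h))
    (hfh_lsc : ∀ h, LowerSemicontinuous (fh h))
    (hf_proper : ProperFn f) (hf_conv : LambdaConvex lam f) (hf_lsc : LowerSemicontinuous f)
    (hliminf : ∀ (x : H) (xh : ℕ → H), Tendsto xh atTop (𝓝 x) →
      f x ≤ Filter.liminf (fun h => fh h (xh h)) atTop)
    (hlimsup : ∀ x : H, ∃ yh : ℕ → H, Tendsto yh atTop (𝓝 x) ∧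
      Filter.limsup (fun h => fh h (yh h)) atTop ≤ f x)
    (xh0 xh1 : ℕ → H) (x0 x1 : H)
    (hx0 : Tendsto xh0 atTop (𝓝 x0)) (hx1 : Tendsto xh1 atTop (𝓝 x1))
    (γh : ℕ → ℝ → H) (γ : ℝ → H) (hγh : ∀ h, ContinuousOn (γh h) (Icc 0 1))
    (hγ : ContinuousOn γ (Icc 0 1)) (hconv : TendstoUniformlyOn γh γ atTop (Icc 0 1)) :
    Theta lam f x0 x1 γ
      ≤ Filter.liminf (fun h => Theta lam (fh h) (xh0 h) (xh1 h) (γh h)) atTop := by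
  have hpt : ∀ t ∈ Icc (0 : ℝ) 1, Tendsto (fun h => γh h t) atTop (𝓝 (γ t)) :=
    fun t ht => hconv.tendsto_at ht
  by_cases hend : γ 0 = x0 ∧ γ 1 = x1
  · have hact : actionFn lam f 0 1 γ ≤ liminf (fun h => actionFn lam (fh h) 0 1 (γh h)) atTop := by
      simp only [action_eq]
      refine le_trans (add_le_add (kin_le_liminf γh γ hpt) ?_) (liminf_add_ennreal _ _)
      refine le_trans ?_ (lintegral_liminf_le' fun h =>
        gradNorm_meas lam (fh h) (hfh_proper h) (hfh_lsc h) (γh h) (hγh h))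
      refine setLIntegral_mono' measurableSet_Ioc fun t ht => ?_
      have hle : gradNorm lam f (γ t) ≤ liminf (fun h => gradNorm lam (fh h) (γh h t)) atTop := by
        refine gradNorm_le_liminf lam fh f (fun i => (hfh_proper i).2) hf_proper _ _
          (hpt t (Ioc_subset_Icc_self ht)) (fun a ha => ?_) (fun y => ?_)
        · exact eventually_lt_of_lt_liminf
            (ha.trans_le (hliminf _ _ (hpt t (Ioc_subset_Icc_self ht))))
        · obtain ⟨yh, hy1, hy2⟩ := hlimsup y
          exact ⟨yh, hy1, fun b hb => eventually_lt_of_limsup_lt (hy2.trans_lt hb)⟩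
      refine (pow_le_pow_left' hle 2).trans (le_of_eq ?_)
      have hmono : Monotone (fun x : ℝ≥0∞ => x ^ 2) := fun a b hab => pow_le_pow_left' hab 2
      exact hmono.map_liminf_of_continuousAt _ (ENNReal.continuous_pow 2).continuousAt
    unfold Theta
    rw [if_pos hend]
    refine hact.trans (liminf_le_liminf (Eventually.of_forall fun h => ?_))
    split_ifs
    · exact le_rfl
    · exact le_top
  · have hev : ∀ᶠ h in atTop, ¬ (γh h 0 = xh0 h ∧ γh h 1 = xh1 h) := by
      by_contra hcon
      have hfr : ∃ᶠ h in atTop, (γh h 0 = xh0 h ∧ γh h 1 = xh1 h) := hcon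
      apply hend
      constructor
      · by_contra hne
        obtain ⟨i, hi, hi'⟩ := (hfr.and_eventually (((hpt 0 (by simp)).prodMk_nhds hx0).eventually
          (isClosed_diagonal.isOpen_compl.mem_nhds (by simpa using hne)))).exists
        exact hi' hi.1
      · by_contra hne
        obtain ⟨i, hi, hi'⟩ := (hfr.and_eventually (((hpt 1 (by simp)).prodMk_nhds hx1).eventually
          (isClosed_diagonal.isOpen_compl.mem_nhds (by simpa using hne)))).exists
        exact hi' hi.2
    refine le_trans le_top (le_liminf_of_le (by isBoundedDefault) ?_)
    filter_upwards [hev] with h hh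
    unfold Theta
    rw [if_neg hh]

end
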